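/- arXiv:1705.07939 — 2 statements merged into one kernel-verified Lean document; each statement's English description precedes it below -/
import Mathlib

section
/- Let a, b, c be complex numbers such that (a+b+1)/2 is not a nonpositive integer, 2c+1 is not a nonpositive integer, and Re(2c − a − b) > −2. Then ₃F₂(a, b, c; (a+b+1)/2, 2c+2; 1) = ₃F₂(a, b, c; (a+b+1)/2, 2c+1; 1) − (2abc/((2c+1)(2c+2)(a+b+1))) · ₃F₂(a+1, b+1, c+1; (a+b+3)/2, 2c+3; 1). -/
open scoped Nat

/-- The generalized hypergeometric series `₃F₂(a, b, c; d, e; 1)`, defined as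
`∑ₙ (a)ₙ(b)ₙ(c)ₙ / ((d)ₙ(e)ₙ n!)` where `(α)ₙ` is the Pochhammer symbol. -/
noncomputable def hyp3F2 (a b c d e : ℂ) : ℂ :=
  ∑' n : ℕ,
    ((ascPochhammer ℂ n).eval a * (ascPochhammer ℂ n).eval b * (ascPochhammer ℂ n).eval c) /
      ((ascPochhammer ℂ n).eval d * (ascPochhammer ℂ n).eval e * (n ! : ℂ))

open Filter Asymptotics in
lemma poch_prod (n : ℕ) (a : ℂ) :
    (ascPochhammer ℂ n).eval a = ∏ j ∈ Finset.range n, (a + j) := by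
  induction n with
  | zero => simp
  | succ n ih => rw [ascPochhammer_succ_eval, ih, Finset.prod_range_succ]

lemma poch_left (n : ℕ) (a : ℂ) :
    (ascPochhammer ℂ (n + 1)).eval a = a * (ascPochhammer ℂ n).eval (a + 1) := by
  rw [ascPochhammer_succ_left]; simp

lemma poch_ne {d : ℂ} (hd : ∀ m : ℕ, d ≠ -(m : ℂ)) (n : ℕ) :
    (ascPochhammer ℂ n).eval d ≠ 0 := by
  rw [poch_prod, Finset.prod_ne_zero_iff]
  intro j _ h
  exact hd j (eq_neg_of_add_eq_zero_left h)

open Filter Asymptotics in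
lemma poch_num (a : ℂ) :
    (fun n : ℕ => (ascPochhammer ℂ (n + 1)).eval a) =O[atTop]
      (fun n : ℕ => (n : ℝ) ^ a.re * (n ! : ℝ)) := by
  by_cases ha : ∀ m : ℕ, a ≠ -(m : ℂ)
  · have h1 := ((Complex.GammaSeq_tendsto_Gamma a).inv₀ (Complex.Gamma_ne_zero ha)).isBigO_one ℝ
    have h2 : (fun n : ℕ => (n : ℂ) ^ a * (n ! : ℂ)) =O[atTop]
        (fun n : ℕ => (n : ℝ) ^ a.re * (n ! : ℝ)) := by
      apply IsBigO.of_bound 1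
      filter_upwards [eventually_gt_atTop 0] with n hn
      rw [norm_mul, Complex.norm_natCast_cpow_of_pos hn, norm_mul]
      simp [abs_of_nonneg, Real.rpow_nonneg]
    refine (h1.mul h2).congr' ?_ ?_
    · filter_upwards [eventually_gt_atTop 0] with n hn
      have hn' : (n : ℂ) ≠ 0 := by exact_mod_cast hn.ne'
      have h3 : (n : ℂ) ^ a ≠ 0 := by simp [Complex.cpow_eq_zero_iff, hn']
      have h4 : (n ! : ℂ) ≠ 0 := by exact_mod_cast n.factorial_ne_zero
      have h5 := poch_ne ha (n + 1)
      rw [Complex.GammaSeq, ← poch_prod]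
      field_simp
    · filter_upwards with n
      simp
  · push Not at ha
    obtain ⟨m, rfl⟩ := ha
    refine (isBigO_zero _ _).congr' ?_ EventuallyEq.rfl
    filter_upwards [eventually_ge_atTop m] with n hn
    rw [poch_prod]
    symm
    exact Finset.prod_eq_zero (i := m) (by simp; omega) (by simp)

open Filter Asymptotics in
lemma poch_den {d : ℂ} (hd : ∀ m : ℕ, d ≠ -(m : ℂ)) :
    (fun n : ℕ => ((ascPochhammer ℂ (n + 1)).eval d)⁻¹) =O[atTop]
      (fun n : ℕ => ((n : ℝ) ^ d.re * (n ! : ℝ))⁻¹) := by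
  have h1 := (Complex.GammaSeq_tendsto_Gamma d).isBigO_one ℝ
  have h2 : (fun n : ℕ => ((n : ℂ) ^ d * (n ! : ℂ))⁻¹) =O[atTop]
      (fun n : ℕ => ((n : ℝ) ^ d.re * (n ! : ℝ))⁻¹) := by
    apply IsBigO.of_bound 1
    filter_upwards [eventually_gt_atTop 0] with n hn
    rw [norm_inv, norm_mul, Complex.norm_natCast_cpow_of_pos hn, norm_inv, norm_mul]
    simp [abs_of_nonneg, Real.rpow_nonneg]
  refine (h1.mul h2).congr' ?_ ?_
  · filter_upwards [eventually_gt_atTop 0] with n hn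
    have hn' : (n : ℂ) ≠ 0 := by exact_mod_cast hn.ne'
    have h3 : (n : ℂ) ^ d ≠ 0 := by simp [Complex.cpow_eq_zero_iff, hn']
    have h4 : (n ! : ℂ) ≠ 0 := by exact_mod_cast n.factorial_ne_zero
    have h5 := poch_ne hd (n + 1)
    rw [Complex.GammaSeq, ← poch_prod]
    field_simp
  · filter_upwards with n
    simp

open Filter Asymptotics in
lemma summable_3F2 (a b c d e : ℂ) (hd : ∀ m : ℕ, d ≠ -(m : ℂ)) (he : ∀ m : ℕ, e ≠ -(m : ℂ))
    (hs : 0 < (d + e - a - b - c).re) :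
    Summable (fun n : ℕ =>
    ((ascPochhammer ℂ n).eval a * (ascPochhammer ℂ n).eval b * (ascPochhammer ℂ n).eval c) /
      ((ascPochhammer ℂ n).eval d * (ascPochhammer ℂ n).eval e * (n ! : ℂ))) := by
  rw [← summable_nat_add_iff 1]
  have hf : (fun n : ℕ => (((n + 1)! : ℕ) : ℂ)⁻¹) =O[atTop]
      (fun n : ℕ => ((n : ℝ) * (n ! : ℝ))⁻¹) := by
    apply IsBigO.of_bound 1
    filter_upwards [eventually_gt_atTop 0] with n hn
    rw [one_mul, norm_inv, norm_inv, Complex.norm_natCast, Real.norm_of_nonneg (by positivity),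
      Nat.factorial_succ]
    push_cast
    gcongr
    linarith
  have h := ((((poch_num a).mul (poch_num b)).mul (poch_num c)).mul
    (((poch_den hd).mul (poch_den he)).mul hf))
  have hsum : Summable (fun n : ℕ => (n : ℝ) ^ (a.re + b.re + c.re - d.re - e.re - 1)) := by
    rw [Real.summable_nat_rpow]
    simp at hs
    linarith
  refine summable_of_isBigO_nat hsum (h.congr' ?_ ?_)
  · filter_upwards with n
    simp only [div_eq_mul_inv, mul_inv]
  · filter_upwards [eventually_gt_atTop 0] with n hn
    have hn' : (0 : ℝ) < n := by exact_mod_cast hn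
    have h4 : (n ! : ℝ) ≠ 0 := by exact_mod_cast n.factorial_ne_zero
    rw [Real.rpow_sub hn', Real.rpow_sub hn', Real.rpow_sub hn', Real.rpow_add hn',
      Real.rpow_add hn', Real.rpow_one]
    have := (Real.rpow_pos_of_pos hn' d.re).ne'
    have := (Real.rpow_pos_of_pos hn' e.re).ne'
    field_simp

theorem watson_contiguous_12 (a b c : ℂ)
    (hd : ∀ m : ℕ, (a + b + 1) / 2 ≠ -(m : ℂ))
    (he : ∀ m : ℕ, 2 * c + 1 ≠ -(m : ℂ))
    (hre : (2 * c - a - b).re > -2) :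
    hyp3F2 a b c ((a + b + 1) / 2) (2 * c + 2) =
      hyp3F2 a b c ((a + b + 1) / 2) (2 * c + 1) -
        2 * a * b * c / ((2 * c + 1) * (2 * c + 2) * (a + b + 1)) *
          hyp3F2 (a + 1) (b + 1) (c + 1) ((a + b + 3) / 2) (2 * c + 3) := by
  have hd' : ∀ m : ℕ, (a + b + 3) / 2 ≠ -(m : ℂ) := by
    intro m h
    apply hd (m + 1)
    push_cast
    linear_combination h
  have he2 : ∀ m : ℕ, 2 * c + 2 ≠ -(m : ℂ) := by
    intro m h
    apply he (m + 1)
    push_cast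
    linear_combination h
  have he3 : ∀ m : ℕ, 2 * c + 3 ≠ -(m : ℂ) := by
    intro m h
    apply he (m + 2)
    push_cast
    linear_combination h
  have key : 0 < (c - (a + b) / 2 + 3 / 2).re := by
    have : c - (a + b) / 2 + 3 / 2 = ((1 / 2 : ℝ) : ℂ) * (2 * c - a - b) + ((3 / 2 : ℝ) : ℂ) := by
      push_cast; ring
    rw [this, Complex.add_re, Complex.re_ofReal_mul, Complex.ofReal_re]
    linarith
  have s1 := summable_3F2 a b c ((a + b + 1) / 2) (2 * c + 2) hd he2 (by
    have : (a + b + 1) / 2 + (2 * c + 2) - a - b - c = (c - (a + b) / 2 + 3 / 2) + 1 := by ring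
    rw [this, Complex.add_re, Complex.one_re]; linarith)
  have s2 := summable_3F2 a b c ((a + b + 1) / 2) (2 * c + 1) hd he (by
    have : (a + b + 1) / 2 + (2 * c + 1) - a - b - c = (c - (a + b) / 2 + 3 / 2) := by ring
    rw [this]; exact key)
  rw [eq_sub_iff_add_eq, ← eq_sub_iff_add_eq']
  unfold hyp3F2
  rw [← s2.tsum_sub s1, (s2.sub s1).tsum_eq_zero_add, ← tsum_mul_left]
  simp only [ascPochhammer_zero, Polynomial.eval_one, Nat.factorial_zero, Nat.cast_one, sub_self,
    zero_add]
  refine tsum_congr fun n => ?_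
  have ed : (a + b + 1) / 2 + 1 = (a + b + 3) / 2 := by ring
  have e1 : 2 * c + 1 + 1 = 2 * c + 2 := by ring
  have e2 : 2 * c + 2 + 1 = 2 * c + 3 := by ring
  have r := ascPochhammer_succ_eval n (2 * c + 2)
  have l := poch_left n (2 * c + 2)
  rw [e2] at l
  rw [poch_left n a, poch_left n b, poch_left n c, poch_left n ((a + b + 1) / 2),
    poch_left n (2 * c + 1), ed, e1, l]
  have hQ := poch_ne he2 n
  have hR := poch_ne he3 n
  have hD := poch_ne hd' n
  have h1 : 2 * c + 1 ≠ 0 := by simpa using he 0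
  have h2 : 2 * c + 2 ≠ 0 := by simpa using he2 0
  have h3 : a + b + 1 ≠ 0 := by intro h; apply hd 0; simp [h]
  have h4 : (n ! : ℂ) ≠ 0 := by exact_mod_cast n.factorial_ne_zero
  have h5 : (n : ℂ) + 1 ≠ 0 := by exact_mod_cast n.succ_ne_zero
  have h6 : 2 * c + 2 + n ≠ 0 := by
    intro h; exact he2 n (eq_neg_of_add_eq_zero_left h)
  have hq : (ascPochhammer ℂ n).eval (2 * c + 2) =
      (2 * c + 2) * (ascPochhammer ℂ n).eval (2 * c + 3) / (2 * c + 2 + n) := by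
    rw [eq_div_iff h6, ← r, l]
  rw [hq, Nat.factorial_succ]
  push_cast
  generalize (ascPochhammer ℂ n).eval (2 * c + 3) = R at *
  generalize (ascPochhammer ℂ n).eval ((a + b + 3) / 2) = D at *
  generalize (ascPochhammer ℂ n).eval (a + 1) = A
  generalize (ascPochhammer ℂ n).eval (b + 1) = B
  generalize (ascPochhammer ℂ n).eval (c + 1) = C
  generalize (n ! : ℂ) = F at *
  have h7 : (2 * c + 1) * ((2 * c + 2) * R / (2 * c + 2 + n)) ≠ 0 := by positivity
  field_simp
  ring
end

section
/- Let a, b, c be complex numbers such that (a+b+3)/2 is not a nonpositive integer, 2c+1 is not a nonpositive integer, and Re(2c − a − b) > −4. Then ₃F₂(a, b, c; (a+b+3)/2, 2c+2; 1) = ₃F₂(a, b, c; (a+b+3)/2, 2c+1; 1) − (2abc/((2c+1)(2c+2)(a+b+3))) · ₃F₂(a+1, b+1, c+1; (a+b+5)/2, 2c+3; 1). -/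
open scoped Nat

open Filter Topology Asymptotics in
theorem wc_inv_tendsto (s : ℂ) :
    Tendsto (fun n => (Complex.GammaSeq s n)⁻¹) atTop (𝓝 (Complex.Gamma s)⁻¹) := by
  by_cases h : Complex.Gamma s = 0
  · rw [Complex.Gamma_eq_zero_iff] at h
    obtain ⟨m, rfl⟩ := h
    rw [Complex.Gamma_neg_nat_eq_zero, inv_zero]
    apply tendsto_const_nhds.congr'
    filter_upwards [eventually_ge_atTop m] with n hn
    have : ∏ j ∈ Finset.range (n + 1), (-(m : ℂ) + j) = 0 :=
      Finset.prod_eq_zero (i := m) (by simp; omega) (by simp)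
    simp [Complex.GammaSeq, this]
  · exact (Complex.GammaSeq_tendsto_Gamma s).inv₀ h

theorem wc_poch_prod (s : ℂ) (n : ℕ) :
    (ascPochhammer ℂ n).eval s = ∏ j ∈ Finset.range n, (s + j) := by
  induction n with
  | zero => simp
  | succ n ih => rw [ascPochhammer_succ_eval, ih, Finset.prod_range_succ]

theorem wc_poch (s : ℂ) (n : ℕ) (hn : n ≠ 0) :
    (ascPochhammer ℂ (n + 1)).eval s = (n : ℂ) ^ s * n ! * (Complex.GammaSeq s n)⁻¹ := by
  rw [wc_poch_prod, Complex.GammaSeq, inv_div, mul_div_cancel₀]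
  have h1 : (n : ℂ) ≠ 0 := by exact_mod_cast hn
  have h2 : (n ! : ℂ) ≠ 0 := by exact_mod_cast n.factorial_ne_zero
  have h3 : (n : ℂ) ^ s ≠ 0 := by simp [Complex.cpow_eq_zero_iff, h1]
  exact mul_ne_zero h3 h2

theorem wc_poch_ne (s : ℂ) (hs : ∀ m : ℕ, s ≠ -(m : ℂ)) (n : ℕ) :
    (ascPochhammer ℂ n).eval s ≠ 0 := by
  rw [wc_poch_prod, Finset.prod_ne_zero_iff]
  intro j _ h
  exact hs j (eq_neg_of_add_eq_zero_left h)

theorem wc_poch_left (s : ℂ) (n : ℕ) :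
    (ascPochhammer ℂ (n + 1)).eval s = s * (ascPochhammer ℂ n).eval (s + 1) := by
  simp [ascPochhammer_succ_left, Polynomial.eval_comp]

theorem wc_alg (x y z u v w A B C D E G F : ℂ) (hF : F ≠ 0) :
    x * y * z / (u * v * w) * (A * B * C * (D * E * G)) =
      (x * F * A) * (y * F * B) * (z * F * C) /
        ((u * F * D⁻¹) * (v * F * E⁻¹) * (w * F * G⁻¹)) := by
  have h : (F * F * F) * (F * F * F)⁻¹ = 1 := mul_inv_cancel₀ (by simp [hF])
  simp only [div_eq_mul_inv, mul_inv, inv_inv] at h ⊢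
  linear_combination (-(x * y * z * (u⁻¹ * v⁻¹ * w⁻¹) * (A * B * C * (D * E * G)))) * h

open Filter Topology Asymptotics in
theorem wc_summable (a b c d e : ℂ) (h : 0 < (d + e - a - b - c).re) :
    Summable (fun n : ℕ =>
      ((ascPochhammer ℂ n).eval a * (ascPochhammer ℂ n).eval b * (ascPochhammer ℂ n).eval c) /
      ((ascPochhammer ℂ n).eval d * (ascPochhammer ℂ n).eval e * (n ! : ℂ))) := by
  rw [← summable_nat_add_iff 1]
  have hs : Summable (fun n : ℕ => (n : ℝ) ^ (a + b + c - (d + e + 1)).re) := by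
    rw [Real.summable_nat_rpow]
    simp at h ⊢
    linarith
  refine summable_of_isBigO_nat hs ?_
  have hG : Tendsto (fun n => (Complex.GammaSeq a n)⁻¹ * (Complex.GammaSeq b n)⁻¹ *
      (Complex.GammaSeq c n)⁻¹ * (Complex.GammaSeq d n * Complex.GammaSeq e n *
      Complex.GammaSeq 1 n)) atTop (𝓝 _) :=
    (((wc_inv_tendsto a).mul (wc_inv_tendsto b)).mul (wc_inv_tendsto c)).mul
      (((Complex.GammaSeq_tendsto_Gamma d).mul (Complex.GammaSeq_tendsto_Gamma e)).mul
        (Complex.GammaSeq_tendsto_Gamma 1))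
  have hO := (isBigO_refl (fun n : ℕ => (n : ℝ) ^ (a + b + c - (d + e + 1)).re) atTop)
  have key := IsBigO.mul hO (hG.norm.isBigO_one ℝ)
  simp only [mul_one] at key
  refine IsBigO.of_norm_left (key.congr' ?_ EventuallyEq.rfl)
  filter_upwards [eventually_ne_atTop 0] with n hn
  have h1 : (n : ℂ) ≠ 0 := by exact_mod_cast hn
  have h2 : (n ! : ℂ) ≠ 0 := by exact_mod_cast n.factorial_ne_zero
  rw [← Complex.norm_natCast_cpow_of_pos (Nat.pos_of_ne_zero hn), ← norm_mul]
  have h1f : (((n + 1)! : ℕ) : ℂ) = (ascPochhammer ℂ (n + 1)).eval 1 := by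
    rw [ascPochhammer_eval_one]
  rw [h1f]
  simp only [wc_poch _ n hn]
  rw [Complex.cpow_sub _ _ h1, Complex.cpow_add _ _ h1, Complex.cpow_add _ _ h1,
    Complex.cpow_add _ _ h1, Complex.cpow_add _ _ h1]
  exact congrArg _ (wc_alg _ _ _ _ _ _ _ _ _ _ _ _ _ h2)

theorem watson_contiguous_14 (a b c : ℂ)
    (hd : ∀ m : ℕ, (a + b + 3) / 2 ≠ -(m : ℂ))
    (he : ∀ m : ℕ, 2 * c + 1 ≠ -(m : ℂ))
    (hre : (2 * c - a - b).re > -4) :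
    hyp3F2 a b c ((a + b + 3) / 2) (2 * c + 2) =
      hyp3F2 a b c ((a + b + 3) / 2) (2 * c + 1) -
        2 * a * b * c / ((2 * c + 1) * (2 * c + 2) * (a + b + 3)) *
          hyp3F2 (a + 1) (b + 1) (c + 1) ((a + b + 5) / 2) (2 * c + 3) := by
  have hhalf : ((a + b + 3) / 2).re = (a.re + b.re + 3) / 2 := by
    rw [show (a + b + 3) / 2 = (a + b + 3) * ((1 / 2 : ℝ) : ℂ) by push_cast; ring,
      Complex.re_mul_ofReal]
    simp
    ring
  simp at hre
  have s1 := wc_summable a b c ((a + b + 3) / 2) (2 * c + 1) (by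
    rw [Complex.sub_re, Complex.sub_re, Complex.sub_re, Complex.add_re, hhalf]; simp; linarith)
  have s2 := wc_summable a b c ((a + b + 3) / 2) (2 * c + 2) (by
    rw [Complex.sub_re, Complex.sub_re, Complex.sub_re, Complex.add_re, hhalf]; simp; linarith)
  rw [eq_sub_iff_add_eq, ← eq_sub_iff_add_eq']
  unfold hyp3F2
  rw [← s1.tsum_sub s2, (s1.sub s2).tsum_eq_zero_add, ← tsum_mul_left]
  simp only [ascPochhammer_zero, Polynomial.eval_one, sub_self, zero_add]
  refine tsum_congr fun n => ?_
  have he' : ∀ m : ℕ, 2 * c + 1 + 1 ≠ -(m : ℂ) := fun m h => he (m + 1) (by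
    push_cast; linear_combination h)
  have he'' : ∀ m : ℕ, 2 * c + 1 + 1 + 1 ≠ -(m : ℂ) := fun m h => he' (m + 1) (by
    push_cast; linear_combination h)
  have hd' : ∀ m : ℕ, (a + b + 3) / 2 + 1 ≠ -(m : ℂ) := fun m h => hd (m + 1) (by
    push_cast; linear_combination h)
  have e1 : (2 * c + 1) ≠ 0 := by simpa using he 0
  have e2 : (2 * c + 1 + 1) ≠ 0 := by simpa using he' 0
  have d1 : (a + b + 3) / 2 ≠ 0 := by simpa using hd 0
  have d2 : a + b + 3 ≠ 0 := fun h => d1 (by rw [h]; simp)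
  rw [show 2 * c + 2 = 2 * c + 1 + 1 by ring, show 2 * c + 3 = 2 * c + 1 + 1 + 1 by ring,
    show (a + b + 5) / 2 = (a + b + 3) / 2 + 1 by ring]
  have q1 := wc_poch_ne _ he'' n
  have q2 := wc_poch_ne _ hd' n
  have q3 : (n ! : ℂ) ≠ 0 := by exact_mod_cast n.factorial_ne_zero
  have q4 : (2 * c + 1 + 1 + n) ≠ 0 := fun h => he' n (eq_neg_of_add_eq_zero_left h)
  have q5 : (n + 1 : ℂ) ≠ 0 := by exact_mod_cast n.succ_ne_zero
  -- (e+1)_n (e+1+n) = (e+1) (e+2)_n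
  have r := (ascPochhammer_succ_eval n (2 * c + 1 + 1)).symm.trans (wc_poch_left (2 * c + 1 + 1) n)
  have r' : (ascPochhammer ℂ n).eval (2 * c + 1 + 1) =
      (2 * c + 1 + 1) * (ascPochhammer ℂ n).eval (2 * c + 1 + 1 + 1) / (2 * c + 1 + 1 + n) := by
    rw [eq_div_iff q4, r]
  have rd : (a + b + 3) = 2 * ((a + b + 3) / 2) := by ring
  rw [rd]
  simp only [wc_poch_left, Nat.factorial_succ, Nat.cast_mul, Nat.cast_succ]
  rw [← rd, r']
  generalize (a + b + 3) / 2 = D at *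
  generalize (ascPochhammer ℂ n).eval (2 * c + 1 + 1 + 1) = E at *
  generalize (ascPochhammer ℂ n).eval (D + 1) = Dn at *
  generalize 2 * c + 1 = e at *
  rw [rd]
  field_simp
  ring
end
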